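/- arXiv:2104.13905 — 4 statements merged into one kernel-verified Lean document; each statement's English description precedes it below -/
import Mathlib

section
/- Let w* be the minimum integer w for which ∑_{d=d_min^h}^{w} B_d ≥ 2^m (such a w exists since |C_h \ {0}| = 2^{k+m} − 1 ≥ 2^m). Then d_min^l ≤ 2·w*. -/
open scoped BigOperators

/-!
Let `M` be at least the index of `D` in `C`. If `C` has at least `M` nonzero codewords of weight at
most `w`, then together with `0` they outnumber the cosets of `D`, so two of them, `x ≠ y`, lie in
the same coset. Their difference is a nonzero codeword of `D`, of weight at most `2 * w` by the
triangle inequality.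
-/

theorem ncard_sep_mem_eq_sum_ncard_fiber {α β : Type*} {s : Set α} (hs : s.Finite) (f : α → β)
    (t : Finset β) : {x ∈ s | f x ∈ t}.ncard = ∑ b ∈ t, {x ∈ s | f x = b}.ncard := by
  classical
  lift s to Finset α using hs
  simp only [SetLike.mem_coe, ← Finset.coe_filter, Set.ncard_coe_finset]
  exact (s.sum_card_fiberwise_eq_card_filter t f).symm

section AddGroup

variable {G : Type*} [AddGroup G] {H K : AddSubgroup G}

theorem exists_ne_neg_add_mem_of_index_lt_ncard [H.FiniteIndex] {s : Set G}
    (hs : H.index < s.ncard) : ∃ x ∈ s, ∃ y ∈ s, x ≠ y ∧ -x + y ∈ H := by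
  have hcosets : (Set.univ : Set (G ⧸ H)).ncard < s.ncard := by
    rwa [Set.ncard_univ, ← H.index_eq_card]
  obtain ⟨x, hx, y, hy, hne, hxy⟩ := Set.exists_ne_map_eq_of_ncard_lt_of_maps_to hcosets
    (f := ((↑) : G → G ⧸ H)) fun _ _ ↦ Set.mem_univ _
  exact ⟨x, hx, y, hy, hne, QuotientAddGroup.eq.mp hxy⟩

theorem exists_ne_neg_add_mem_of_relIndex_lt_ncard [H.IsFiniteRelIndex K] {s : Set G}
    (hsK : s ⊆ K) (hs : H.relIndex K < s.ncard) : ∃ x ∈ s, ∃ y ∈ s, x ≠ y ∧ -x + y ∈ H := by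
  have hcard : (((↑) : K → G) ⁻¹' s).ncard = s.ncard :=
    Set.ncard_preimage_of_injective_subset_range Subtype.val_injective (by simpa using hsK)
  obtain ⟨x, hx, y, hy, hne, hxy⟩ :=
    exists_ne_neg_add_mem_of_index_lt_ncard (H := H.addSubgroupOf K) (hs.trans_eq hcard.symm)
  exact ⟨x, hx, y, hy, Subtype.coe_ne_coe.mpr hne, hxy⟩

theorem relIndex_eq_of_card_eq_mul [Finite H] (hHK : H ≤ K) {a : ℕ}
    (hK : Nat.card K = Nat.card H * a) : H.relIndex K = a := by
  have htower := AddSubgroup.relIndex_mul_relIndex ⊥ H K bot_le hHK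
  rw [AddSubgroup.relIndex_bot_left, AddSubgroup.relIndex_bot_left, hK] at htower
  exact Nat.eq_of_mul_eq_mul_left Nat.card_pos htower

end AddGroup

section Code

variable {ι : Type*} [Fintype ι] {β : ι → Type*} [∀ i, AddGroup (β i)] [∀ i, DecidableEq (β i)]

/-- The minimum distance of an additive code, i.e. the least Hamming weight of a nonzero codeword.
It is `0` for the trivial code, which has no nonzero codeword. -/
noncomputable def minDist (C : AddSubgroup (∀ i, β i)) : ℕ :=
  sInf {d | ∃ c ∈ C, c ≠ 0 ∧ hammingNorm c = d}

/-- The weight distribution `d ↦ B_d` of an additive code. The values are meaningful for finite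
codes; `Set.ncard` sends an infinite set of codewords to `0`. -/
noncomputable def weightDistribution (C : AddSubgroup (∀ i, β i)) (d : ℕ) : ℕ :=
  {c | c ∈ C ∧ hammingNorm c = d}.ncard

variable {C D : AddSubgroup (∀ i, β i)} {c : ∀ i, β i} {w : ℕ}

theorem hammingNorm_neg_add_le (x y : ∀ i, β i) :
    hammingNorm (-x + y) ≤ hammingNorm x + hammingNorm y := by
  simpa only [← hammingDist_eq_hammingNorm, hammingDist_zero_left, hammingDist_zero_right]
    using hammingDist_triangle x 0 y

theorem minDist_le_hammingNorm (hc : c ∈ C) (hc0 : c ≠ 0) : minDist C ≤ hammingNorm c :=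
  Nat.sInf_le ⟨c, hc, hc0, rfl⟩

theorem minDist_pos (hC : C ≠ ⊥) : 0 < minDist C := by
  obtain ⟨c, hc, hc0⟩ := C.bot_or_exists_ne_zero.resolve_left hC
  obtain ⟨c', -, hc'0, hc'⟩ : minDist C ∈ {d | ∃ c ∈ C, c ≠ 0 ∧ hammingNorm c = d} :=
    Nat.sInf_mem ⟨_, c, hc, hc0, rfl⟩
  exact hc' ▸ hammingNorm_pos_iff.mpr hc'0

theorem minDist_le_two_mul_of_relIndex_lt_ncard [D.IsFiniteRelIndex C]
    (h : D.relIndex C < {c | c ∈ C ∧ hammingNorm c ≤ w}.ncard) : minDist D ≤ 2 * w := by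
  obtain ⟨x, ⟨-, hx⟩, y, ⟨-, hy⟩, hne, hxy⟩ :=
    exists_ne_neg_add_mem_of_relIndex_lt_ncard (fun _ hc ↦ hc.1) h
  calc
    minDist D ≤ hammingNorm (-x + y) := minDist_le_hammingNorm hxy (neg_add_eq_zero.not.mpr hne)
    _ ≤ hammingNorm x + hammingNorm y := hammingNorm_neg_add_le x y
    _ ≤ 2 * w := by lia

theorem sum_weightDistribution_Icc_minDist_add_one [Finite C] (hC : C ≠ ⊥) (w : ℕ) :
    ∑ d ∈ Finset.Icc (minDist C) w, weightDistribution C d + 1 =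
      {c | c ∈ C ∧ hammingNorm c ≤ w}.ncard := by
  have hfin : (C : Set (∀ i, β i)).Finite := Set.toFinite _
  have hsum : ∑ d ∈ Finset.Icc (minDist C) w, weightDistribution C d =
      {c | c ∈ C ∧ hammingNorm c ∈ Finset.Icc (minDist C) w}.ncard :=
    (ncard_sep_mem_eq_sum_ncard_fiber hfin hammingNorm _).symm
  have hzero : (0 : ∀ i, β i) ∉ {c | c ∈ C ∧ hammingNorm c ∈ Finset.Icc (minDist C) w} := by
    simp [(minDist_pos hC).ne']
  rw [hsum, ← Set.ncard_insert_of_notMem hzero (hfin.subset fun _ hc ↦ hc.1)]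
  congr 1
  ext c
  rcases eq_or_ne c 0 with rfl | hc0
  · simp
  · have hmin : c ∈ C → minDist C ≤ hammingNorm c := fun hc ↦ minDist_le_hammingNorm hc hc0
    simp +contextual [hc0, hmin]

theorem ncard_hammingNorm_le_card (C : AddSubgroup (∀ i, β i)) :
    {c | c ∈ C ∧ hammingNorm c ≤ Fintype.card ι}.ncard = Nat.card C := by
  simp only [hammingNorm_le_card_fintype, and_true]
  rfl

theorem stmt2_general [Finite C] {M : ℕ} (hDM : D.relIndex C ≤ M) (hMC : M < Nat.card C) :
    minDist D ≤
      2 * sInf {w | M ≤ ∑ d ∈ Finset.Icc (minDist C) w, weightDistribution C d} := by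
  have hC : C ≠ ⊥ := by
    rintro rfl
    rw [AddSubgroup.relIndex_bot_right] at hDM
    rw [AddSubgroup.card_bot] at hMC
    lia
  have : D.IsFiniteRelIndex C := AddSubgroup.isFiniteRelIndex_iff_finiteIndex.mpr inferInstance
  have hattained : {w | M ≤ ∑ d ∈ Finset.Icc (minDist C) w, weightDistribution C d}.Nonempty := by
    refine ⟨Fintype.card ι, Nat.lt_add_one_iff.mp ?_⟩
    rwa [sum_weightDistribution_Icc_minDist_add_one hC, ncard_hammingNorm_le_card]
  apply minDist_le_two_mul_of_relIndex_lt_ncard (C := C)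
  rw [← sum_weightDistribution_Icc_minDist_add_one hC]
  exact Nat.lt_add_one_iff.mpr (hDM.trans (Nat.sInf_mem hattained))

end Code

theorem stmt2 (k m n : ℕ) (hk : 1 ≤ k) (hm : 1 ≤ m) (hn : k + m ≤ n)
    (Ch Cl : Submodule (ZMod 2) (Fin n → ZMod 2)) (hsub : Cl ≤ Ch)
    (hChcard : Nat.card Ch = 2 ^ (k + m)) (hClcard : Nat.card Cl = 2 ^ k)
    -- weight distribution of the higher-rate code
    (B : ℕ → ℕ)
    (hB : ∀ d, B d = Nat.card {c : Fin n → ZMod 2 // c ∈ Ch ∧ hammingNorm c = d})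
    -- minimum distances of the two codes
    (dminh dminl : ℕ)
    (hdminh : dminh = sInf {d : ℕ | ∃ c ∈ Ch, c ≠ 0 ∧ hammingNorm c = d})
    (hdminl : dminl = sInf {d : ℕ | ∃ c ∈ Cl, c ≠ 0 ∧ hammingNorm c = d})
    -- w* is the least w with ∑_{d=dminh}^w B_d ≥ 2^m
    (wstar : ℕ)
    (hwstar : wstar = sInf {w : ℕ | 2 ^ m ≤ ∑ d ∈ Finset.Icc dminh w, B d}) :
    dminl ≤ 2 * wstar := by
  obtain rfl : B = weightDistribution Ch.toAddSubgroup := funext hB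
  subst hdminh hdminl hwstar
  have hindex : Cl.toAddSubgroup.relIndex Ch.toAddSubgroup = 2 ^ m :=
    relIndex_eq_of_card_eq_mul hsub (hChcard.trans (by rw [pow_add, ← hClcard]; rfl))
  exact stmt2_general hindex.le
    ((Nat.pow_lt_pow_right one_lt_two (by lia : m < k + m)).trans_eq hChcard.symm)
end

section
/- Every tail-biting path in TBP(σ) can be obtained by first concatenating finitely many irreducible error events from IEE(σ) into a closed path at σ and then applying a cyclic shift. Equivalently: for every (s, a) ∈ TBP(σ) there is a cyclic shift of (s, a) whose state/output sequence is the concatenation of finitely many elements of IEE(σ). -/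
/-- `IsIEE E σ N ℓ s a` states that the path of length `ℓ` with state sequence
`s 0, …, s ℓ` and output sequence `a 0, …, a (ℓ-1)` is an irreducible error event
at state `σ` (for a tail-biting trellis of depth `N`): it has length between `1`
and `N`, starts and ends at `σ`, all its transitions are labeled edges, and no
interior state lies in `{τ : τ ≤ σ}`. -/
def IsIEE {S A : Type*} [LinearOrder S] (E : S → A → S → Prop) (σ : S) (N ℓ : ℕ)
    (s : ℕ → S) (a : ℕ → A) : Prop :=
  1 ≤ ℓ ∧ ℓ ≤ N ∧ s 0 = σ ∧ s ℓ = σ ∧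
    (∀ i < ℓ, E (s i) (a i) (s (i + 1))) ∧
    ∀ i, 0 < i → i < ℓ → ¬ s i ≤ σ

/-!
A cyclic shift turns a visit to `σ` into the starting point, so the path may be assumed to be closed
at `σ`. Cutting it at all its visits to `σ` leaves segments that avoid `σ` in their interior; since
the path never goes below `σ`, these interiors stay strictly above `σ`.
-/

/-- A tail-biting path of length `N`: only the states `s 0, …, s N` and the outputs
`a 0, …, a (N - 1)` matter, the remaining values of `s` and `a` being arbitrary. -/
structure IsTailBitingPath {S A : Type*} (E : S → A → S → Prop) (N : ℕ) (s : ℕ → S) (a : ℕ → A) :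
    Prop where
  edge : ∀ i < N, E (s i) (a i) (s (i + 1))
  closed : s 0 = s N

/-- The cyclic shift by `j` of the first `N` terms of a sequence, extended `N`-periodically. It
serves for states as well as outputs, the last state `s N` of a tail-biting path being `s 0`. -/
def cyclicShift {α : Type*} (N j : ℕ) (f : ℕ → α) (i : ℕ) : α :=
  f ((j + i) % N)

theorem exists_consecutive_breakpoints {P : ℕ → Prop} {n : ℕ} (h0 : P 0) (hn : P n) :
    ∃ (r : ℕ) (t : ℕ → ℕ), t 0 = 0 ∧ t r = n ∧ StrictMono t ∧ (∀ i ≤ r, P (t i)) ∧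
      ∀ i < r, ∀ x ∈ Set.Ioo (t i) (t (i + 1)), ¬ P x := by
  classical
  -- Adding all indices `≥ n` makes the set infinite, so `Nat.nth` takes no junk values.
  let Q : ℕ → Prop := fun x => P x ∨ n ≤ x
  have hQ : {x | Q x}.Infinite := (Set.Ici_infinite n).mono fun _ => Or.inr
  have hmono : StrictMono (Nat.nth Q) := Nat.nth_strictMono hQ
  have hlast : Nat.nth Q (Nat.count Q n) = n := Nat.nth_count (Or.inl hn)
  refine ⟨Nat.count Q n, Nat.nth Q, Nat.nth_zero_of_zero (Or.inl h0), hlast, hmono, ?_, ?_⟩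
  · intro i hi
    have hle : Nat.nth Q i ≤ n := hlast ▸ hmono.monotone hi
    obtain hP | hge := Nat.nth_mem_of_infinite hQ i
    · exact hP
    · exact hle.antisymm hge ▸ hn
  · intro i _ x ⟨hx, hx'⟩ hP
    exact hx.not_ge (Nat.le_nth_of_lt_nth_succ hx' (Or.inl hP))

theorem isIEE_segment {S A : Type*} [LinearOrder S] {E : S → A → S → Prop} {σ : S} {N m n : ℕ}
    {s : ℕ → S} {a : ℕ → A} (hmn : m < n) (hlen : n - m ≤ N) (hm : s m = σ) (hn : s n = σ)
    (hedge : ∀ i ∈ Set.Ico m n, E (s i) (a i) (s (i + 1)))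
    (hinterior : ∀ i ∈ Set.Ioo m n, σ < s i) :
    IsIEE E σ N (n - m) (fun x => s (m + x)) (fun x => a (m + x)) := by
  refine ⟨Nat.sub_pos_of_lt hmn, hlen, hm, ?_, fun i hi => ?_, fun i hi hi' => ?_⟩
  · simpa only [Nat.add_sub_cancel' hmn.le] using hn
  · exact hedge (m + i) ⟨by omega, by omega⟩
  · exact (hinterior (m + i) ⟨by omega, by omega⟩).not_ge

namespace IsTailBitingPath

variable {S A : Type*} {E : S → A → S → Prop} {N : ℕ} {s : ℕ → S} {a : ℕ → A}

theorem apply_add_one_mod (h : IsTailBitingPath E N s a) {i : ℕ} (hi : i < N) :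
    s ((i + 1) % N) = s (i + 1) := by
  obtain hlt | rfl := Nat.lt_or_eq_of_le (Nat.succ_le_of_lt hi)
  · rw [Nat.mod_eq_of_lt hlt]
  · rw [Nat.mod_self, h.closed]

theorem exists_lt_eq (h : IsTailBitingPath E N s a) (hN : 0 < N) {σ : S}
    (hvisit : ∃ i ≤ N, s i = σ) : ∃ j < N, s j = σ := by
  obtain ⟨i, hi, hσ⟩ := hvisit
  obtain hlt | rfl := Nat.lt_or_eq_of_le hi
  · exact ⟨i, hlt, hσ⟩
  · exact ⟨0, hN, h.closed.trans hσ⟩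

protected theorem cyclicShift (h : IsTailBitingPath E N s a) (j : ℕ) :
    IsTailBitingPath E N (cyclicShift N j s) (cyclicShift N j a) where
  edge i hi := by
    have hlt : (j + i) % N < N := Nat.mod_lt _ (Nat.zero_lt_of_lt hi)
    have hsucc : s ((j + (i + 1)) % N) = s ((j + i) % N + 1) := by
      rw [← add_assoc, ← Nat.mod_add_mod, h.apply_add_one_mod hlt]
    simpa only [cyclicShift, hsucc] using h.edge _ hlt
  closed := by simp only [cyclicShift, add_zero, Nat.add_mod_right]

theorem exists_isIEE_decomposition [LinearOrder S] {σ : S} (h : IsTailBitingPath E N s a)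
    (h0 : s 0 = σ) (hmin : ∀ i < N, ¬ s i < σ) :
    ∃ (r : ℕ) (t : ℕ → ℕ), t 0 = 0 ∧ t r = N ∧ StrictMono t ∧
      ∀ i < r, IsIEE E σ N (t (i + 1) - t i) (fun x => s (t i + x)) (fun x => a (t i + x)) := by
  obtain ⟨r, t, ht0, htr, hmono, hvisit, hbetween⟩ :=
    exists_consecutive_breakpoints (P := fun i => s i = σ) h0 (h.closed ▸ h0)
  refine ⟨r, t, ht0, htr, hmono, fun i hi => ?_⟩
  have hle : t (i + 1) ≤ N := htr ▸ hmono.monotone (Nat.succ_le_of_lt hi)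
  have habove : ∀ x ∈ Set.Ioo (t i) (t (i + 1)), σ < s x := fun x hx =>
    (not_lt.mp (hmin x (hx.2.trans_le hle))).lt_of_ne' (hbetween i hi x hx)
  exact isIEE_segment (hmono i.lt_succ_self) ((Nat.sub_le _ _).trans hle) (hvisit i hi.le)
    (hvisit (i + 1) hi) (fun x hx => h.edge x (hx.2.trans_le hle)) habove

end IsTailBitingPath

theorem stmt4_general {S A : Type*} [LinearOrder S]
    (E : S → A → S → Prop) (N : ℕ) (hN : 1 ≤ N) (σ : S)
    (s : ℕ → S) (a : ℕ → A)
    (hpath : ∀ i < N, E (s i) (a i) (s (i + 1)))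
    (hclosed : s 0 = s N)
    (hvisit : ∃ i ≤ N, s i = σ)
    (hmin : ∀ i ≤ N, ¬ s i < σ) :
    ∃ j < N, ∃ r : ℕ, 0 < r ∧ ∃ t : ℕ → ℕ,
      t 0 = 0 ∧ t r = N ∧ (∀ i < r, t i < t (i + 1)) ∧
      ∀ i < r, IsIEE E σ N (t (i + 1) - t i)
        (fun x => s ((j + t i + x) % N)) (fun x => a ((j + t i + x) % N)) := by
  have h : IsTailBitingPath E N s a := ⟨hpath, hclosed⟩
  obtain ⟨j, hj, hjσ⟩ := h.exists_lt_eq hN hvisit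
  have hstart : cyclicShift N j s 0 = σ := by
    rwa [cyclicShift, add_zero, Nat.mod_eq_of_lt hj]
  have hmin' : ∀ i < N, ¬ cyclicShift N j s i < σ := fun i _ => hmin _ (Nat.mod_lt _ hN).le
  obtain ⟨r, t, ht0, htr, hmono, hiee⟩ :=
    (h.cyclicShift j).exists_isIEE_decomposition hstart hmin'
  have hr : 0 < r := Nat.pos_of_ne_zero (by rintro rfl; omega)
  refine ⟨j, hj, r, hr, t, ht0, htr, fun i _ => hmono i.lt_succ_self, fun i hi => ?_⟩
  simpa only [cyclicShift, ← add_assoc] using hiee i hi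

/-- Every tail-biting path in `TBP(σ)` admits a cyclic shift (by some `j < N`)
which is a concatenation of finitely many irreducible error events in `IEE(σ)`.
The shifted path has states `i ↦ s ((j + i) % N)` and outputs
`i ↦ a ((j + i) % N)`, and the breakpoints `0 = t 0 < t 1 < ⋯ < t r = N`
cut it into segments each of which is an element of `IEE(σ)`. -/
theorem stmt4 {S A : Type*} [Fintype S] [LinearOrder S]
    (E : S → A → S → Prop) (N : ℕ) (hN : 1 ≤ N) (σ : S)
    (s : ℕ → S) (a : ℕ → A)
    -- (s, a) is a tail-biting path of length N …
    (hpath : ∀ i < N, E (s i) (a i) (s (i + 1)))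
    (hclosed : s 0 = s N)
    -- … belonging to TBP(σ): it visits σ and never visits a state below σ
    (hvisit : ∃ i ≤ N, s i = σ)
    (hmin : ∀ i ≤ N, ¬ s i < σ) :
    ∃ j < N, ∃ r : ℕ, 0 < r ∧ ∃ t : ℕ → ℕ,
      t 0 = 0 ∧ t r = N ∧ (∀ i < r, t i < t (i + 1)) ∧
      ∀ i < r, IsIEE E σ N (t (i + 1) - t i)
        (fun x => s ((j + t i + x) % N)) (fun x => a ((j + t i + x) % N)) :=
  stmt4_general E N hN σ s a hpath hclosed hvisit hmin
end

section
/- Every order-s decoding region Z_s(c) is an open subset of ℝⁿ. Moreover, for every c ∈ C_l and every integer s ≥ 2, if Z_s(c) is nonempty then Z_{s−1}(c) is nonempty. Consequently, Z_s(c) is open and nonempty for every c ∈ C_l and every 1 ≤ s ≤ λ. -/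
open scoped BigOperators

/-- The BPSK modulation map: `c ∈ F₂ⁿ` is sent to the point of `ℝⁿ`
with coordinates `A(1 - 2 cᵢ)`. -/
noncomputable def bpsk (n : ℕ) (A : ℝ) (c : Fin n → ZMod 2) :
    EuclideanSpace ℝ (Fin n) :=
  (WithLp.equiv 2 (Fin n → ℝ)).symm fun i => A * (1 - 2 * ((c i).val : ℝ))

/-- The probability-zero set of points equidistant from two distinct
higher-rate BPSK codeword points. -/
def ambigSet (n : ℕ) (A : ℝ) (Ch : Set (Fin n → ZMod 2)) :
    Set (EuclideanSpace ℝ (Fin n)) :=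
  {y | ∃ c₁ ∈ Ch, ∃ c₂ ∈ Ch, c₁ ≠ c₂ ∧
    ‖y - bpsk n A c₁‖ = ‖y - bpsk n A c₂‖}

/-- The order-`s` decoding region `Z_s(c)`: the set of `y ∈ ℝⁿ \ N` for which
there exist distinct `c₁, …, c_{s-1} ∈ C_h \ C_l` (a finset `T` of cardinality
`s - 1`) all strictly closer to `y` than `c`, while `c` is strictly closer to
`y` than every other codeword of `C_h`. -/
def Zreg (n : ℕ) (A : ℝ) (Ch Cl : Set (Fin n → ZMod 2)) (s : ℕ)
    (c : Fin n → ZMod 2) : Set (EuclideanSpace ℝ (Fin n)) :=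
  {y | y ∉ ambigSet n A Ch ∧ ∃ T : Finset (Fin n → ZMod 2),
    T.card = s - 1 ∧ (↑T : Set (Fin n → ZMod 2)) ⊆ Ch \ Cl ∧
    (∀ c' ∈ T, ‖y - bpsk n A c'‖ < ‖y - bpsk n A c‖) ∧
    ∀ c' ∈ Ch, c' ≠ c → c' ∉ T → ‖y - bpsk n A c‖ < ‖y - bpsk n A c'‖}

/-!
Let `p` be the point of the codeword `c` and move `y ∈ Z_s(c)` along the segment `p + t • (y - p)`,
`t ≤ 1`, towards `p`. A point closer than `p` stops being so exactly once, when the segment crosses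
the bisector of the two points, and a point farther away than `p` stays so. By inversion about `p`,
the reciprocal of the crossing time is a linear functional of `y - p`, and distinct points give
distinct functionals. As the cells are open, `y` can first be moved slightly so that no two crossing
times agree; stopping just after the first crossing then lowers the order of `c` by exactly one, and
another small move avoids the equidistant points, a finite union of hyperplanes.
-/

section Topology

open Set

theorem setOf_injOn_eq_iInter {ι X Y : Type*} (s : Set ι) (g : ι → X → Y) :
    {y | s.InjOn fun i => g i y} = ⋂ p ∈ s.offDiag, {y | g p.1 y ≠ g p.2 y} := by
  ext y
  simp only [InjOn, mem_ofPred_eq, mem_iInter, mem_offDiag, Prod.forall]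
  grind

theorem isOpen_setOf_injOn {ι X Y : Type*} [TopologicalSpace X] [TopologicalSpace Y] [T2Space Y]
    {s : Set ι} (hs : s.Finite) {g : ι → X → Y} (hg : ∀ i ∈ s, Continuous (g i)) :
    IsOpen {y | s.InjOn fun i => g i y} := by
  rw [setOf_injOn_eq_iInter]
  exact hs.offDiag.isOpen_biInter fun p hp => isOpen_ne_fun (hg _ hp.1) (hg _ hp.2.1)

variable {𝕜 E : Type*} [NontriviallyNormedField 𝕜] [AddCommGroup E] [Module 𝕜 E]
  [TopologicalSpace E] [ContinuousAdd E] [ContinuousSMul 𝕜 E]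

theorem dense_setOf_apply_ne {f : E →L[𝕜] 𝕜} (hf : f ≠ 0) (a : 𝕜) :
    Dense {y | f y ≠ a} :=
  (dense_compl_singleton a).preimage (f.isOpenMap_of_ne_zero hf)

theorem dense_setOf_injOn_apply_add {ι : Type*} {s : Set ι} (hs : s.Finite)
    {f : ι → E →L[𝕜] 𝕜} (hf : s.InjOn f) (b : ι → 𝕜) :
    Dense {y | s.InjOn fun i => f i y + b i} := by
  rw [setOf_injOn_eq_iInter, ← sInter_image]
  refine (hs.offDiag.image _).dense_sInter ?_ ?_ <;> rintro _ ⟨⟨i, j⟩, ⟨hi, hj, hij⟩, rfl⟩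
  · exact isOpen_ne_fun (by fun_prop) (by fun_prop)
  · convert dense_setOf_apply_ne (sub_ne_zero.2 (hf.ne hi hj hij)) (b j - b i) using 3
    rw [sub_apply, ne_eq, ← add_comm (b j), ← sub_eq_sub_iff_add_eq_add]

end Topology

theorem exists_lt_forall_erase_lt {ι α : Type*} [DecidableEq ι] [LinearOrder α]
    [DenselyOrdered α] [NoMinOrder α] [NoMaxOrder α] {T : Finset ι} (hT : T.Nonempty)
    {g : ι → α} (hg : Set.InjOn g T) :
    ∃ d ∈ T, ∃ r, g d < r ∧ ∀ a ∈ T.erase d, r < g a := by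
  obtain ⟨d, hd, hmin⟩ := T.exists_min_image g hT
  have hlt : ∀ a ∈ T.erase d, g d < g a := fun a ha =>
    (hmin a (Finset.mem_of_mem_erase ha)).lt_of_ne
      (hg.ne hd (Finset.mem_of_mem_erase ha) (Finset.ne_of_mem_erase ha).symm)
  have : Nonempty α := ⟨g d⟩
  obtain ⟨r, hdr, hr⟩ := Order.exists_between_finsets {g d} ((T.erase d).image g) <| by
    simpa only [Finset.mem_singleton, forall_eq, Finset.forall_mem_image] using hlt
  exact ⟨d, hd, r, hdr _ (Finset.mem_singleton_self _), Finset.forall_mem_image.1 hr⟩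

section Cells

variable {ι E : Type*} [SeminormedAddCommGroup E]

/-- The points of `E` equidistant from two distinctly labelled sites among the `x a`, `a ∈ C`; for
`x = bpsk n A` this is `ambigSet`. -/
def equidistantSet (x : ι → E) (C : Set ι) : Set E :=
  {y | ∃ a ∈ C, ∃ b ∈ C, a ≠ b ∧ ‖y - x a‖ = ‖y - x b‖}

/-- The higher-order Voronoi cell of `c` with prescribed closer sites: the points whose closer sites
than `x c`, among the `x a` with `a ∈ C`, are those labelled by `T`, with no ties. It is meant for
`T ⊆ C`, which is not imposed. -/
def voronoiCell (x : ι → E) (C : Set ι) (T : Finset ι) (c : ι) : Set E :=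
  {y | (∀ a ∈ T, ‖y - x a‖ < ‖y - x c‖) ∧ ∀ a ∈ C, a ≠ c → a ∉ T → ‖y - x c‖ < ‖y - x a‖}

/-- The order-`s` decoding region of `c` for arbitrary sites `x a`, `a ∈ C`, where only sites
outside `D` may be closer than `x c`; for `x = bpsk n A` this is `Zreg`. Orders are counted from
`1`, and by truncated subtraction order `0` means order `1`. -/
def decodingRegion (x : ι → E) (C D : Set ι) (s : ℕ) (c : ι) : Set E :=
  {y | y ∉ equidistantSet x C ∧
    ∃ T : Finset ι, T.card = s - 1 ∧ (T : Set ι) ⊆ C \ D ∧ y ∈ voronoiCell x C T c}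

theorem compl_equidistantSet (x : ι → E) (C : Set ι) :
    (equidistantSet x C)ᶜ = {y | C.InjOn fun a => ‖y - x a‖} := by
  ext y
  simp only [equidistantSet, Set.InjOn, Set.mem_compl_iff, Set.mem_ofPred_eq]
  grind

theorem injOn_of_notMem_equidistantSet {x : ι → E} {C : Set ι} {y : E}
    (hy : y ∉ equidistantSet x C) : C.InjOn x := by
  have hinj : C.InjOn fun a => ‖y - x a‖ := (compl_equidistantSet x C).subset hy
  exact fun a ha b hb hab => hinj ha hb (congrArg (‖y - ·‖) hab)

theorem isClosed_equidistantSet (x : ι → E) {C : Set ι} (hC : C.Finite) :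
    IsClosed (equidistantSet x C) := by
  rw [← isOpen_compl_iff, compl_equidistantSet]
  exact isOpen_setOf_injOn hC fun a _ => by fun_prop

theorem ne_of_mem_voronoiCell {x : ι → E} {C : Set ι} {T : Finset ι} {a c : ι} {y : E}
    (hy : y ∈ voronoiCell x C T c) (ha : a ∈ C) (hac : a ≠ c) : x a ≠ x c := by
  intro hxac
  by_cases haT : a ∈ T
  · exact (hy.1 a haT).ne (by rw [hxac])
  · exact (hy.2 a ha hac haT).ne (by rw [hxac])

theorem isOpen_voronoiCell (x : ι → E) {C : Set ι} (hC : C.Finite) (T : Finset ι) (c : ι) :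
    IsOpen (voronoiCell x C T c) := by
  simp only [voronoiCell, Set.ofPred_and, Set.ofPred_forall]
  refine (isOpen_biInter_finset fun a _ => isOpen_lt (by fun_prop) (by fun_prop)).inter
    (hC.isOpen_biInter fun a _ => isOpen_iInter_of_finite fun _ => isOpen_iInter_of_finite fun _ =>
      isOpen_lt (by fun_prop) (by fun_prop))

theorem isOpen_decodingRegion (x : ι → E) {C : Set ι} (hC : C.Finite) (D : Set ι) (s : ℕ) (c : ι) :
    IsOpen (decodingRegion x C D s c) := by
  have heq : decodingRegion x C D s c = (equidistantSet x C)ᶜ ∩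
      ⋃ T ∈ {T : Finset ι | T.card = s - 1 ∧ (T : Set ι) ⊆ C \ D}, voronoiCell x C T c := by
    ext y
    simp only [decodingRegion, Set.mem_ofPred_eq, Set.mem_iUnion, Set.mem_inter_iff,
      Set.mem_compl_iff, exists_prop, and_assoc]
  rw [heq]
  exact (isClosed_equidistantSet x hC).isOpen_compl.inter
    (isOpen_biUnion fun T _ => isOpen_voronoiCell x hC T c)

end Cells

section InnerProductSpace

variable {ι E : Type*} [NormedAddCommGroup E] [InnerProductSpace ℝ E]

theorem dense_compl_equidistantSet {x : ι → E} {C : Set ι} (hC : C.Finite) (hx : C.InjOn x) :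
    Dense (equidistantSet x C)ᶜ := by
  have hinner : C.InjOn fun a => innerSL ℝ (x a) := fun a ha b hb hab =>
    hx ha hb (innerSL_inj.1 hab)
  refine (dense_setOf_injOn_apply_add hC hinner fun a => -(‖x a‖ ^ 2 / 2)).mono ?_
  rw [compl_equidistantSet]
  intro y hy a ha b hb hab
  refine hy ha hb ?_
  have hsq : ‖y - x a‖ ^ 2 = ‖y - x b‖ ^ 2 := congrArg (· ^ 2) hab
  rw [norm_sub_sq_real, norm_sub_sq_real, real_inner_comm, real_inner_comm (x b)] at hsq
  simp only [innerSL_apply_apply]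
  linarith

/-- The reciprocal of the parameter at which the line `t ↦ c + t • (y - c)` crosses the bisector of
`p` and `c`; it is `0` when there is no crossing. It is written with the inversion about `c` because
its gradient in `y` is then seen to determine `p`. -/
noncomputable def crossingRate (c p y : E) : ℝ :=
  2 * inner ℝ (EuclideanGeometry.inversion c 1 p - c) (y - c)

theorem dense_setOf_injOn_crossingRate {x : ι → E} {T : Set ι} (hT : T.Finite) (hx : T.InjOn x)
    (c : E) : Dense {y | T.InjOn fun a => crossingRate c (x a) y} := by
  let v : ι → E := fun a => (2 : ℝ) • (EuclideanGeometry.inversion c 1 (x a) - c)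
  have hv : T.InjOn fun a => innerSL ℝ (v a) := fun a ha b hb hab =>
    hx ha hb <| EuclideanGeometry.inversion_injective c one_ne_zero <|
      sub_left_injective <| smul_right_injective E two_ne_zero <| innerSL_inj.1 hab
  convert dense_setOf_injOn_apply_add hT hv fun a => -inner ℝ (v a) c using 5 with y a
  rw [crossingRate, innerSL_apply_apply, ← sub_eq_add_neg, ← inner_sub_right, real_inner_smul_left]

theorem mul_norm_lineMap_inv_sub_sq_sub (c p y : E) {r : ℝ} (hr : r ≠ 0) :
    r * (‖AffineMap.lineMap c y r⁻¹ - p‖ ^ 2 - ‖AffineMap.lineMap c y r⁻¹ - c‖ ^ 2) =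
      ‖p - c‖ ^ 2 * (r - crossingRate c p y) := by
  have hrate : ‖p - c‖ ^ 2 * crossingRate c p y = 2 * inner ℝ (y - c) (p - c) := by
    rcases eq_or_ne p c with rfl | hpc
    · simp
    have hnorm : ‖p - c‖ ≠ 0 := norm_ne_zero_iff.2 (sub_ne_zero.2 hpc)
    rw [crossingRate, ← vsub_eq_sub (EuclideanGeometry.inversion c 1 p),
      EuclideanGeometry.inversion_vsub_center, vsub_eq_sub, dist_eq_norm, real_inner_smul_left,
      real_inner_comm]
    field_simp
  have hc : AffineMap.lineMap c y r⁻¹ - c = r⁻¹ • (y - c) := by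
    rw [AffineMap.lineMap_apply_module', add_sub_cancel_right]
  rw [← sub_sub_sub_cancel_right _ p c, hc, norm_sub_sq_real, real_inner_smul_left, mul_sub,
    mul_sub, hrate]
  field_simp
  ring

theorem norm_lineMap_inv_sub_lt_iff (c p y : E) {r : ℝ} (hr : 0 < r) :
    ‖AffineMap.lineMap c y r⁻¹ - p‖ < ‖AffineMap.lineMap c y r⁻¹ - c‖ ↔
      r < crossingRate c p y := by
  rcases eq_or_ne p c with rfl | hpc
  · simp [crossingRate, hr.le]
  have hpos : 0 < ‖p - c‖ ^ 2 := pow_pos (norm_pos_iff.2 (sub_ne_zero.2 hpc)) 2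
  rw [← sq_lt_sq₀ (norm_nonneg _) (norm_nonneg _), ← sub_neg, ← smul_neg_iff_of_pos_left hr,
    smul_eq_mul, mul_norm_lineMap_inv_sub_sq_sub c p y hr.ne', ← smul_eq_mul,
    smul_neg_iff_of_pos_left hpos, sub_neg]

theorem norm_lineMap_inv_sub_center_lt_iff {c p : E} (hpc : p ≠ c) (y : E) {r : ℝ} (hr : 0 < r) :
    ‖AffineMap.lineMap c y r⁻¹ - c‖ < ‖AffineMap.lineMap c y r⁻¹ - p‖ ↔
      crossingRate c p y < r := by
  have hpos : 0 < ‖p - c‖ ^ 2 := pow_pos (norm_pos_iff.2 (sub_ne_zero.2 hpc)) 2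
  rw [← sq_lt_sq₀ (norm_nonneg _) (norm_nonneg _), ← sub_pos, ← mul_pos_iff_of_pos_left hr,
    mul_norm_lineMap_inv_sub_sq_sub c p y hr.ne', mul_pos_iff_of_pos_left hpos, sub_pos]

theorem lineMap_inv_mem_voronoiCell_iff {x : ι → E} {C : Set ι} {T : Finset ι} {c : ι}
    (hne : ∀ a ∈ C, a ≠ c → x a ≠ x c) (y : E) {r : ℝ} (hr : 0 < r) :
    AffineMap.lineMap (x c) y r⁻¹ ∈ voronoiCell x C T c ↔
      (∀ a ∈ T, r < crossingRate (x c) (x a) y) ∧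
        ∀ a ∈ C, a ≠ c → a ∉ T → crossingRate (x c) (x a) y < r :=
  and_congr (forall₂_congr fun a _ => norm_lineMap_inv_sub_lt_iff (x c) (x a) y hr)
    (forall₄_congr fun a ha hac _ => norm_lineMap_inv_sub_center_lt_iff (hne a ha hac) y hr)

theorem exists_voronoiCell_erase_nonempty [DecidableEq ι] {x : ι → E} {C : Set ι} (hC : C.Finite)
    {T : Finset ι} (hT : T.Nonempty) (hx : Set.InjOn x T) {c : ι}
    (h : (voronoiCell x C T c).Nonempty) : ∃ d ∈ T, (voronoiCell x C (T.erase d) c).Nonempty := by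
  obtain ⟨y, hy, hinj⟩ :=
    (dense_setOf_injOn_crossingRate T.finite_toSet hx (x c)).inter_open_nonempty _
      (isOpen_voronoiCell x hC T c) h
  have hne : ∀ a ∈ C, a ≠ c → x a ≠ x c := fun a ha hac => ne_of_mem_voronoiCell hy ha hac
  obtain ⟨hcloser, hfarther⟩ :=
    (lineMap_inv_mem_voronoiCell_iff hne y one_pos).1 (by simpa using hy)
  obtain ⟨d, hd, r, hdr, hr⟩ := exists_lt_forall_erase_lt hT hinj
  have hr1 : 1 < r := (hcloser d hd).trans hdr
  refine ⟨d, hd, _, (lineMap_inv_mem_voronoiCell_iff hne y (one_pos.trans hr1)).2 ⟨hr, ?_⟩⟩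
  intro a ha hac haT
  rcases eq_or_ne a d with rfl | had
  · exact hdr
  · exact (hfarther a ha hac fun haT' => haT (Finset.mem_erase.2 ⟨had, haT'⟩)).trans hr1

theorem decodingRegion_nonempty_sub_one {x : ι → E} {C D : Set ι} (hC : C.Finite) {s : ℕ}
    (hs : 2 ≤ s) {c : ι} (h : (decodingRegion x C D s c).Nonempty) :
    (decodingRegion x C D (s - 1) c).Nonempty := by
  classical
  obtain ⟨y, hyN, T, hcard, hT, hy⟩ := h
  have hx : C.InjOn x := injOn_of_notMem_equidistantSet hyN
  have hTne : T.Nonempty := Finset.card_pos.1 (by lia)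
  obtain ⟨d, hd, hcell⟩ := exists_voronoiCell_erase_nonempty hC hTne
    (hx.mono fun a ha => (hT ha).1) ⟨y, hy⟩
  obtain ⟨z, hz, hzN⟩ := (dense_compl_equidistantSet hC hx).inter_open_nonempty _
    (isOpen_voronoiCell x hC (T.erase d) c) hcell
  have hcard' : (T.erase d).card = s - 1 - 1 := by rw [Finset.card_erase_of_mem hd, hcard]
  exact ⟨z, hzN, T.erase d, hcard', fun a ha => hT (Finset.mem_of_mem_erase ha), hz⟩

theorem decodingRegion_nonempty_of_le {x : ι → E} {C D : Set ι} (hC : C.Finite) {s t : ℕ}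
    (hs : 1 ≤ s) (hst : s ≤ t) {c : ι} (h : (decodingRegion x C D t c).Nonempty) :
    (decodingRegion x C D s c).Nonempty :=
  Nat.decreasingInduction' (P := fun j => (decodingRegion x C D j c).Nonempty)
    (fun _ _ hsj => decodingRegion_nonempty_sub_one hC (Nat.succ_le_succ (hs.trans hsj))) hst h

theorem stmt5_general {x : ι → E} {C D : Set ι} (hC : C.Finite) {lam : ℕ}
    (hlam : IsGreatest {s : ℕ | 1 ≤ s ∧ ∀ c ∈ D, (decodingRegion x C D s c).Nonempty} lam) :
    (∀ c ∈ D, ∀ s : ℕ, 1 ≤ s → IsOpen (decodingRegion x C D s c)) ∧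
    (∀ c ∈ D, ∀ s : ℕ, 2 ≤ s →
      (decodingRegion x C D s c).Nonempty → (decodingRegion x C D (s - 1) c).Nonempty) ∧
    (∀ c ∈ D, ∀ s : ℕ, 1 ≤ s → s ≤ lam →
      IsOpen (decodingRegion x C D s c) ∧ (decodingRegion x C D s c).Nonempty) :=
  ⟨fun c _ s _ => isOpen_decodingRegion x hC D s c,
    fun _ _ _ hs h => decodingRegion_nonempty_sub_one hC hs h,
    fun c hc s hs hsl => ⟨isOpen_decodingRegion x hC D s c,
      decodingRegion_nonempty_of_le hC hs hsl (hlam.1.2 c hc)⟩⟩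

end InnerProductSpace

theorem stmt5 (k m n : ℕ) (hk : 1 ≤ k) (hm : 1 ≤ m) (hn : k + m ≤ n)
    (A : ℝ) (hA : 0 < A)
    (Ch Cl : Submodule (ZMod 2) (Fin n → ZMod 2)) (hsub : Cl ≤ Ch)
    (hChcard : Nat.card Ch = 2 ^ (k + m)) (hClcard : Nat.card Cl = 2 ^ k)
    -- λ is the largest s ≥ 1 such that Z_s(c) is nonempty for all c ∈ C_l
    (lam : ℕ)
    (hlam : IsGreatest
      {s : ℕ | 1 ≤ s ∧ ∀ c ∈ Cl, (Zreg n A ↑Ch ↑Cl s c).Nonempty} lam) :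
    (∀ c ∈ Cl, ∀ s : ℕ, 1 ≤ s → IsOpen (Zreg n A ↑Ch ↑Cl s c)) ∧
    (∀ c ∈ Cl, ∀ s : ℕ, 2 ≤ s →
      (Zreg n A ↑Ch ↑Cl s c).Nonempty → (Zreg n A ↑Ch ↑Cl (s - 1) c).Nonempty) ∧
    (∀ c ∈ Cl, ∀ s : ℕ, 1 ≤ s → s ≤ lam →
      IsOpen (Zreg n A ↑Ch ↑Cl s c) ∧ (Zreg n A ↑Ch ↑Cl s c).Nonempty) :=
  stmt5_general (x := bpsk n A) (Set.toFinite (Ch : Set (Fin n → ZMod 2))) hlam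
end

section
/- Let n ≥ 2 be an integer and let 0 < r < w be real numbers. Define f on [−r, r] by f(t) = ((t + √(t² + w² − r²))/w)^{n−2} · (1 + t/√(t² + w² − r²)). Then f is monotonically increasing on [−r, r], f(−r) = (1 − r/w)^{n−1}, f(r) = (1 + r/w)^{n−1}, and consequently (1 − r/w)^{n−1} ≤ f(t) ≤ (1 + r/w)^{n−1} for all t ∈ [−r, r]. -/
/-!
With `c = w ^ 2 - r ^ 2` and `u = t + √(t ^ 2 + c)`, the relation `u * (√(t ^ 2 + c) - t) = c`
gives `t / √(t ^ 2 + c) = 1 - 2 * c / (u ^ 2 + c)`. Both factors of the density are therefore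
increasing functions of `u`, and `u` is a positive increasing function of `t`.
At `t = ±r` the square root is `w`, so both bases equal `1 ± r / w`.
-/

section AddSqrt

variable {c : ℝ}

theorem abs_lt_sqrt_sq_add (hc : 0 < c) (t : ℝ) : |t| < √(t ^ 2 + c) :=
  Real.lt_sqrt_of_sq_lt (by rw [sq_abs]; linarith)

theorem add_sqrt_sq_add_pos (hc : 0 < c) (t : ℝ) : 0 < t + √(t ^ 2 + c) := by
  linarith [neg_lt_of_abs_lt (abs_lt_sqrt_sq_add hc t)]

theorem strictMono_add_sqrt_sq_add (hc : 0 < c) : StrictMono fun t : ℝ ↦ t + √(t ^ 2 + c) := by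
  intro a b hab
  have hsq : √(b ^ 2 + c) ^ 2 = b ^ 2 + c := Real.sq_sqrt (by positivity)
  have hgap : 0 < 2 * (b - a) * (b + √(b ^ 2 + c)) :=
    mul_pos (by linarith) (add_sqrt_sq_add_pos hc b)
  have hlt : √(a ^ 2 + c) < b - a + √(b ^ 2 + c) := by
    refine (Real.sqrt_lt' (add_pos_of_pos_of_nonneg (sub_pos.2 hab) (Real.sqrt_nonneg _))).2 ?_
    calc a ^ 2 + c < a ^ 2 + c + 2 * (b - a) * (b + √(b ^ 2 + c)) := lt_add_of_pos_right _ hgap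
      _ = (b - a + √(b ^ 2 + c)) ^ 2 := by linear_combination -hsq
  change a + √(a ^ 2 + c) < b + √(b ^ 2 + c)
  linarith

theorem div_sqrt_sq_add_eq (hc : 0 < c) (t : ℝ) :
    t / √(t ^ 2 + c) = 1 - 2 * c / ((t + √(t ^ 2 + c)) ^ 2 + c) := by
  have hsq : √(t ^ 2 + c) ^ 2 = t ^ 2 + c := Real.sq_sqrt (by positivity)
  have hu := add_sqrt_sq_add_pos hc t
  have hs : 0 < √(t ^ 2 + c) := Real.sqrt_pos.2 (by positivity)
  set s := √(t ^ 2 + c)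
  have hden : (t + s) ^ 2 + c = 2 * s * (t + s) := by linear_combination -hsq
  have hnum : c = (s - t) * (t + s) := by linear_combination -hsq
  calc t / s = 1 - (s - t) / s := by field_simp; ring
    _ = 1 - 2 * ((s - t) * (t + s)) / (2 * s * (t + s)) := by field_simp
    _ = 1 - 2 * c / ((t + s) ^ 2 + c) := by rw [hden, ← hnum]

theorem strictMono_div_sqrt_sq_add (hc : 0 < c) : StrictMono fun t : ℝ ↦ t / √(t ^ 2 + c) := by
  intro a b hab
  have hu : a + √(a ^ 2 + c) < b + √(b ^ 2 + c) := strictMono_add_sqrt_sq_add hc hab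
  have hpos := add_sqrt_sq_add_pos hc a
  simp only [div_sqrt_sq_add_eq hc]
  gcongr

theorem one_add_div_sqrt_sq_add_pos (hc : 0 < c) (t : ℝ) : 0 < 1 + t / √(t ^ 2 + c) := by
  have hs : 0 < √(t ^ 2 + c) := Real.sqrt_pos.2 (by positivity)
  rw [one_add_div hs.ne', add_comm]
  exact div_pos (add_sqrt_sq_add_pos hc t) hs

end AddSqrt

/-- The normalized density on the sphere of radius `r` in dimension `m + 2` induced by radial
projection from a sphere of radius `w` centred at a point of norm `r`, as a function of the first
coordinate `t`. Using `m` for the dimension minus two avoids truncated subtraction. -/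
noncomputable def inducedDensity (m : ℕ) (r w t : ℝ) : ℝ :=
  ((t + √(t ^ 2 + w ^ 2 - r ^ 2)) / w) ^ m * (1 + t / √(t ^ 2 + w ^ 2 - r ^ 2))

section InducedDensity

variable (m : ℕ) {r w : ℝ}

theorem strictMono_inducedDensity (hrw : |r| < w) : StrictMono (inducedDensity m r w) := by
  have hw : 0 < w := (abs_nonneg r).trans_lt hrw
  have hc : 0 < w ^ 2 - r ^ 2 := sub_pos.2 (sq_lt_sq.2 (hrw.trans_le (le_abs_self w)))
  have hbase (t : ℝ) : 0 < (t + √(t ^ 2 + (w ^ 2 - r ^ 2))) / w :=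
    div_pos (add_sqrt_sq_add_pos hc t) hw
  have hpow : Monotone fun t : ℝ ↦ ((t + √(t ^ 2 + (w ^ 2 - r ^ 2))) / w) ^ m := fun a b hab ↦
    pow_le_pow_left₀ (hbase a).le
      (div_le_div_of_nonneg_right ((strictMono_add_sqrt_sq_add hc).monotone hab) hw.le) m
  unfold inducedDensity
  simp only [add_sub_assoc]
  exact hpow.mul_strictMono ((strictMono_div_sqrt_sq_add hc).const_add 1)
    (fun t ↦ pow_pos (hbase t) m) (fun t ↦ (one_add_div_sqrt_sq_add_pos hc t).le)

theorem inducedDensity_self (hw : 0 < w) : inducedDensity m r w r = (1 + r / w) ^ (m + 1) := by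
  have hs : √(r ^ 2 + w ^ 2 - r ^ 2) = w := by rw [add_sub_cancel_left, Real.sqrt_sq hw.le]
  rw [inducedDensity, hs, add_div, div_self hw.ne', add_comm (r / w), pow_succ]

theorem inducedDensity_neg_self (hw : 0 < w) :
    inducedDensity m r w (-r) = (1 - r / w) ^ (m + 1) :=
  calc inducedDensity m r w (-r) = inducedDensity m (-r) w (-r) := by
        simp only [inducedDensity, neg_sq]
    _ = (1 + -r / w) ^ (m + 1) := inducedDensity_self m hw
    _ = (1 - r / w) ^ (m + 1) := by rw [neg_div, ← sub_eq_add_neg]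

end InducedDensity

/-- The induced density on the codeword sphere, as a function of the first
coordinate `t ∈ [−r, r]` of the projected point, is monotonically increasing,
attains `(1 − r/w)^{n−1}` at `t = −r` and `(1 + r/w)^{n−1}` at `t = r`, and is
therefore bounded between these two values. -/
theorem stmt18 (n : ℕ) (hn : 2 ≤ n) (r w : ℝ) (hr : 0 < r) (hrw : r < w)
    (f : ℝ → ℝ)
    (hf : ∀ t : ℝ, f t =
      ((t + Real.sqrt (t ^ 2 + w ^ 2 - r ^ 2)) / w) ^ (n - 2) *
        (1 + t / Real.sqrt (t ^ 2 + w ^ 2 - r ^ 2))) :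
    MonotoneOn f (Set.Icc (-r) r) ∧
    f (-r) = (1 - r / w) ^ (n - 1) ∧
    f r = (1 + r / w) ^ (n - 1) ∧
    ∀ t ∈ Set.Icc (-r) r,
      (1 - r / w) ^ (n - 1) ≤ f t ∧ f t ≤ (1 + r / w) ^ (n - 1) := by
  obtain ⟨m, rfl⟩ := Nat.exists_eq_add_of_le' hn
  obtain rfl : f = inducedDensity m r w := funext hf
  have hw : 0 < w := hr.trans hrw
  have hmono : Monotone (inducedDensity m r w) :=
    (strictMono_inducedDensity m (by rwa [abs_of_pos hr])).monotone
  have hleft : inducedDensity m r w (-r) = (1 - r / w) ^ (m + 1) := inducedDensity_neg_self m hw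
  have hright : inducedDensity m r w r = (1 + r / w) ^ (m + 1) := inducedDensity_self m hw
  exact ⟨hmono.monotoneOn _, hleft, hright, fun t ht ↦
    ⟨hleft.symm.trans_le (hmono ht.1), (hmono ht.2).trans_eq hright⟩⟩
end
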